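/- The n-harmonic product *̄ on H^1 is commutative and associative: for all w1, w2, w3 ∈ H^1 one has w1 *̄ w2 = w2 *̄ w1 and (w1 *̄ w2) *̄ w3 = w1 *̄ (w2 *̄ w3). -/

import Mathlib

open scoped BigOperators

/-- The two-letter alphabet {x, y}. -/
inductive Letter : Type
  | x : Letter
  | y : Letter
deriving DecidableEq

/-- `H = ℚ⟨x,y⟩`, the noncommutative polynomial ring over ℚ in two
indeterminates, realized as the monoid algebra of the free monoid on `{x,y}`. -/
abbrev H : Type := MonoidAlgebra ℚ (FreeMonoid Letter)

namespace H

/-- The monomial (word) of `H` corresponding to an element of the free monoid. -/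
noncomputable def word (w : FreeMonoid Letter) : H := MonoidAlgebra.single w 1

/-- The generator `x`. -/
noncomputable def X : H := word (FreeMonoid.of Letter.x)

/-- The generator `y`. -/
noncomputable def Y : H := word (FreeMonoid.of Letter.y)

/-- The word `z_k = x^{k-1} y` (for `k ≥ 1`). -/
def zW (k : ℕ) : FreeMonoid Letter :=
  FreeMonoid.ofList (List.replicate (k - 1) Letter.x ++ [Letter.y])

/-- `z_k = x^{k-1} y` as an element of `H`. -/
noncomputable def z (k : ℕ) : H := word (zW k)

/-- A list `[k₁,…,kₙ]` gives the word `z_{k₁} z_{k₂} ⋯ z_{kₙ}`. -/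
def zListW (ks : List ℕ) : FreeMonoid Letter :=
  FreeMonoid.ofList (ks.flatMap fun k => List.replicate (k - 1) Letter.x ++ [Letter.y])

/-- `H¹ = ℚ + Hy` as a ℚ-submodule of `H`. -/
noncomputable def H1 : Submodule ℚ H :=
  LinearMap.range (LinearMap.mulRight ℚ Y) ⊔ Submodule.span ℚ {1}

/-- `H⁰ = ℚ + xHy` as a ℚ-submodule of `H`. -/
noncomputable def H0 : Submodule ℚ H :=
  LinearMap.range ((LinearMap.mulRight ℚ Y).comp (LinearMap.mulLeft ℚ X)) ⊔
    Submodule.span ℚ {1}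

/-- Parse a word of `H¹` into the exponent list of its `z`-decomposition:
`z_{k₁}⋯z_{kₙ} ↦ [k₁,…,kₙ]` (auxiliary accumulator version). -/
def toZAux : List Letter → ℕ → List ℕ
  | [], _ => []
  | Letter.x :: r, n => toZAux r (n + 1)
  | Letter.y :: r, n => (n + 1) :: toZAux r 0

/-- The `z`-decomposition of a word of `H¹`. -/
def toZ (w : FreeMonoid Letter) : List ℕ := toZAux (FreeMonoid.toList w) 0

/-- The harmonic product on words of `H¹` (via `z`-decompositions):
`1 * w = w * 1 = w` and
`z_k w₁ * z_l w₂ = z_k (w₁ * z_l w₂) + z_l (z_k w₁ * w₂) + z_{k+l} (w₁ * w₂)`. -/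
noncomputable def harmW : List ℕ → List ℕ → H
  | [], w => word (zListW w)
  | k :: w1, [] => word (zListW (k :: w1))
  | k :: w1, l :: w2 =>
      z k * harmW w1 (l :: w2) + z l * harmW (k :: w1) w2 + z (k + l) * harmW w1 w2
termination_by w1 w2 => w1.length + w2.length
decreasing_by all_goals simp [Nat.lt_succ_iff] <;> omega

/-- The n-harmonic product on words of `H¹`:
`1 *̄ w = w *̄ 1 = w` and
`z_k w₁ *̄ z_l w₂ = z_k (w₁ *̄ z_l w₂) + z_l (z_k w₁ *̄ w₂) − z_{k+l} (w₁ *̄ w₂)`. -/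
noncomputable def nharmW : List ℕ → List ℕ → H
  | [], w => word (zListW w)
  | k :: w1, [] => word (zListW (k :: w1))
  | k :: w1, l :: w2 =>
      z k * nharmW w1 (l :: w2) + z l * nharmW (k :: w1) w2 - z (k + l) * nharmW w1 w2
termination_by w1 w2 => w1.length + w2.length
decreasing_by all_goals simp [Nat.lt_succ_iff] <;> omega

/-- The harmonic product `*` on `H¹`, extended ℚ-bilinearly. -/
noncomputable def harm (a b : H) : H :=
  Finsupp.sum a.coeff fun w1 c1 =>
    Finsupp.sum b.coeff fun w2 c2 => (c1 * c2) • harmW (toZ w1) (toZ w2)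

/-- The n-harmonic product `*̄` on `H¹`, extended ℚ-bilinearly. -/
noncomputable def nharm (a b : H) : H :=
  Finsupp.sum a.coeff fun w1 c1 =>
    Finsupp.sum b.coeff fun w2 c2 => (c1 * c2) • nharmW (toZ w1) (toZ w2)

/-- The letter exchange `τ(x) = y`, `τ(y) = x`. -/
def τ : Letter → Letter
  | Letter.x => Letter.y
  | Letter.y => Letter.x

/-- `δ(w) = 1` if `w` is the empty word, `0` otherwise. -/
def δ : List Letter → ℚ
  | [] => 1
  | _ :: _ => 0

/-- The shuffle product on words:
`1 ш w = w ш 1 = w` and `u₁w₁ ш u₂w₂ = u₁(w₁ ш u₂w₂) + u₂(u₁w₁ ш w₂)`. -/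
noncomputable def shW : List Letter → List Letter → H
  | [], w => word (FreeMonoid.ofList w)
  | u :: w, [] => word (FreeMonoid.ofList (u :: w))
  | u1 :: w1, u2 :: w2 =>
      word (FreeMonoid.of u1) * shW w1 (u2 :: w2) +
        word (FreeMonoid.of u2) * shW (u1 :: w1) w2
termination_by w1 w2 => w1.length + w2.length
decreasing_by all_goals simp [Nat.lt_succ_iff]

/-- The n-shuffle product on words: `1 ш̄ w = w ш̄ 1 = w` and
`u₁w₁ ш̄ u₂w₂ = u₁(w₁ ш̄ u₂w₂) + u₂(u₁w₁ ш̄ w₂) − δ(w₁)τ(u₁)u₂w₂ − δ(w₂)τ(u₂)u₁w₁`. -/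
noncomputable def nshW : List Letter → List Letter → H
  | [], w => word (FreeMonoid.ofList w)
  | u :: w, [] => word (FreeMonoid.ofList (u :: w))
  | u1 :: w1, u2 :: w2 =>
      word (FreeMonoid.of u1) * nshW w1 (u2 :: w2) +
        word (FreeMonoid.of u2) * nshW (u1 :: w1) w2 -
        δ w1 • word (FreeMonoid.ofList (τ u1 :: u2 :: w2)) -
        δ w2 • word (FreeMonoid.ofList (τ u2 :: u1 :: w1))
termination_by w1 w2 => w1.length + w2.length
decreasing_by all_goals simp [Nat.lt_succ_iff]

/-- The shuffle product `ш` on `H`, extended ℚ-bilinearly. -/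
noncomputable def sh (a b : H) : H :=
  Finsupp.sum a.coeff fun w1 c1 =>
    Finsupp.sum b.coeff fun w2 c2 =>
      (c1 * c2) • shW (FreeMonoid.toList w1) (FreeMonoid.toList w2)

/-- The n-shuffle product `ш̄` on `H`, extended ℚ-bilinearly. -/
noncomputable def nsh (a b : H) : H :=
  Finsupp.sum a.coeff fun w1 c1 =>
    Finsupp.sum b.coeff fun w2 c2 =>
      (c1 * c2) • nshW (FreeMonoid.toList w1) (FreeMonoid.toList w2)

/-- `S₁`: the ℚ-algebra endomorphism of `H` with `S₁(x) = x`, `S₁(y) = x + y`. -/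
noncomputable def S1 : H →ₐ[ℚ] H :=
  MonoidAlgebra.lift ℚ H (FreeMonoid Letter)
    (FreeMonoid.lift fun u => match u with
      | Letter.x => X
      | Letter.y => X + Y)

/-- `S₂`: the ℚ-algebra endomorphism of `H` with `S₂(x) = x`, `S₂(y) = y − x`. -/
noncomputable def S2 : H →ₐ[ℚ] H :=
  MonoidAlgebra.lift ℚ H (FreeMonoid Letter)
    (FreeMonoid.lift fun u => match u with
      | Letter.x => X
      | Letter.y => Y - X)

/-- `S` on a word: `S(1) = 1` and `S(Fy) = S₁(F)y`. -/
noncomputable def SW (w : FreeMonoid Letter) : H :=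
  match (FreeMonoid.toList w).getLast? with
  | some Letter.y =>
      S1 (word (FreeMonoid.ofList (FreeMonoid.toList w).dropLast)) * Y
  | _ => word w

/-- The ℚ-linear map `S : H¹ → H¹` with `S(1) = 1`, `S(Fy) = S₁(F)y`. -/
noncomputable def S (a : H) : H := Finsupp.sum a.coeff fun w c => c • SW w

/-- `S̃` on a word: `S̃(1) = 1` and `S̃(Fy) = S₂(F)y`. -/
noncomputable def StW (w : FreeMonoid Letter) : H :=
  match (FreeMonoid.toList w).getLast? with
  | some Letter.y =>
      S2 (word (FreeMonoid.ofList (FreeMonoid.toList w).dropLast)) * Y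
  | _ => word w

/-- The ℚ-linear map `S̃ : H¹ → H¹` with `S̃(1) = 1`, `S̃(Fy) = S₂(F)y`. -/
noncomputable def St (a : H) : H := Finsupp.sum a.coeff fun w c => c • StW w

/-- The multiple zeta value `ζ(k₁,…,kₙ)`: the sum over strictly decreasing
tuples `m₁ > m₂ > ⋯ > mₙ > 0` of `1/(m₁^{k₁}⋯mₙ^{kₙ})`. -/
noncomputable def mzeta (ks : List ℕ) : ℝ :=
  ∑' m : {f : Fin ks.length → ℕ // (∀ i, 0 < f i) ∧
      ∀ i j : Fin ks.length, i < j → f j < f i},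
    ∏ i : Fin ks.length, ((m.1 i : ℝ) ^ ks.get i)⁻¹

/-- The non-strict multiple zeta value `ζ̄(k₁,…,kₙ)`: the sum over weakly
decreasing tuples `m₁ ≥ m₂ ≥ ⋯ ≥ mₙ > 0` of `1/(m₁^{k₁}⋯mₙ^{kₙ})`. -/
noncomputable def nmzeta (ks : List ℕ) : ℝ :=
  ∑' m : {f : Fin ks.length → ℕ // (∀ i, 0 < f i) ∧
      ∀ i j : Fin ks.length, i ≤ j → f j ≤ f i},
    ∏ i : Fin ks.length, ((m.1 i : ℝ) ^ ks.get i)⁻¹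

/-- The evaluation map `Z : H⁰ → ℝ`, `Z(1) = 1`,
`Z(z_{k₁}⋯z_{kₙ}) = ζ(k₁,…,kₙ)` (extended ℚ-linearly to `H`). -/
noncomputable def Z (a : H) : ℝ := Finsupp.sum a.coeff fun w c => (c : ℝ) * mzeta (toZ w)

/-- The n-evaluation map `Z̄ : H⁰ → ℝ`, `Z̄(1) = 1`,
`Z̄(z_{k₁}⋯z_{kₙ}) = ζ̄(k₁,…,kₙ)` (extended ℚ-linearly to `H`). -/
noncomputable def Zbar (a : H) : ℝ := Finsupp.sum a.coeff fun w c => (c : ℝ) * nmzeta (toZ w)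

/-- `i`-fold n-harmonic power: `a^{*̄ 0} = 1`, `a^{*̄ (i+1)} = a *̄ a^{*̄ i}`. -/
noncomputable def nharmPow : ℕ → H → H
  | 0, _ => 1
  | i + 1, a => nharm a (nharmPow i a)

/-- `i`-fold n-shuffle power: `a^{ш̄ 0} = 1`, `a^{ш̄ (i+1)} = a ш̄ a^{ш̄ i}`. -/
noncomputable def nshPow : ℕ → H → H
  | 0, _ => 1
  | i + 1, a => nsh a (nshPow i a)

end H

open H

/-!
`*̄` is the case `S = ℕ+`, `c = -1` of the quasi-shuffle product on words over an additive
semigroup `S`, in which two colliding letters `k`, `l` contribute the letter `k + l` with weight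
`c`. Expanding `(kP ⋆ lQ) ⋆ mT` and `kP ⋆ (lQ ⋆ mT)` by the recursion gives the same seven leading
letters `k, l, m, k + l, k + m, l + m, k + l + m`, each followed by a triple product of smaller
total length, so associativity follows by induction on the three factors. Words in the `z_k` are
uniquely parsed, which makes `z`-decomposition a left inverse of the embedding of words over `ℕ+`
into `H`; hence `*̄` is the quasi-shuffle product transported along the two maps.
-/

section QuasiShuffle

open scoped MonoidAlgebra

variable {R S : Type*} [CommSemiring R]

variable (R) in
/-- The word of length one on the letter `k`, in the algebra `R⟨S⟩` of noncommutative polynomials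
with indeterminates `S`, realized (as `H` is) as the monoid algebra of the free monoid. -/
noncomputable def letter (k : S) : R[FreeMonoid S] :=
  MonoidAlgebra.of R (FreeMonoid S) (FreeMonoid.of k)

theorem of_of_mul_eq_letter_mul (k : S) (w : FreeMonoid S) :
    MonoidAlgebra.of R (FreeMonoid S) (FreeMonoid.of k * w) =
      letter R k * MonoidAlgebra.of R (FreeMonoid S) w :=
  map_mul _ _ _

theorem letter_mul_induction {motive : R[FreeMonoid S] → Prop} (P : R[FreeMonoid S])
    (one : motive 1) (letter_mul : ∀ k P, motive P → motive (letter R k * P))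
    (add : ∀ P Q, motive P → motive Q → motive (P + Q))
    (smul : ∀ (r : R) P, motive P → motive (r • P)) : motive P := by
  induction P using MonoidAlgebra.induction_on with
  | of w =>
    induction w using FreeMonoid.inductionOn' with
    | one => simpa only [map_one] using one
    | of_mul k w ih => simpa only [of_of_mul_eq_letter_mul] using letter_mul k _ ih
  | add P Q hP hQ => exact add P Q hP hQ
  | smul r P hP => exact smul r P hP

/-- The quasi-shuffle product of weight `c` of two words: they are interleaved in all ways, and
letters `k`, `l` of the two words may also merge into `k + l`, at the cost of a factor `c`. -/
noncomputable def quasiShuffleWord [Add S] (c : R) : List S → List S → R[FreeMonoid S]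
  | [], v => MonoidAlgebra.of R _ (FreeMonoid.ofList v)
  | k :: u, [] => MonoidAlgebra.of R _ (FreeMonoid.ofList (k :: u))
  | k :: u, l :: v =>
      letter R k * quasiShuffleWord c u (l :: v) + letter R l * quasiShuffleWord c (k :: u) v +
        c • (letter R (k + l) * quasiShuffleWord c u v)
termination_by u v => u.length + v.length

/-- The quasi-shuffle product of weight `c` on `R⟨S⟩`, as a bilinear map. Weight `1` gives the
harmonic product, weight `-1` the n-harmonic product and weight `0` the shuffle product. -/
noncomputable def quasiShuffle [Add S] (c : R) :
    R[FreeMonoid S] →ₗ[R] R[FreeMonoid S] →ₗ[R] R[FreeMonoid S] :=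
  (MonoidAlgebra.basis _ R).constr R fun u =>
    (MonoidAlgebra.basis _ R).constr R fun v => quasiShuffleWord c u.toList v.toList

variable (c : R)

local infixl:70 "⋆" => quasiShuffle c

theorem quasiShuffle_of_of [Add S] (u v : FreeMonoid S) :
    MonoidAlgebra.of R _ u ⋆ MonoidAlgebra.of R _ v = quasiShuffleWord c u.toList v.toList := by
  simp only [quasiShuffle, MonoidAlgebra.of_apply, ← MonoidAlgebra.basis_apply,
    Module.Basis.constr_basis]

theorem one_quasiShuffle [Add S] (P : R[FreeMonoid S]) : 1 ⋆ P = P := by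
  induction P using MonoidAlgebra.induction_on with
  | of w =>
    rw [← map_one (MonoidAlgebra.of R (FreeMonoid S)), quasiShuffle_of_of, FreeMonoid.toList_one,
      quasiShuffleWord, FreeMonoid.ofList_toList]
  | add P Q hP hQ => rw [map_add, hP, hQ]
  | smul r P hP => rw [map_smul, hP]

theorem quasiShuffle_one [Add S] (P : R[FreeMonoid S]) : P ⋆ 1 = P := by
  induction P using MonoidAlgebra.induction_on with
  | of w =>
    rw [← map_one (MonoidAlgebra.of R (FreeMonoid S)), quasiShuffle_of_of, FreeMonoid.toList_one]
    cases w <;> simp [quasiShuffleWord]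
  | add P Q hP hQ => rw [map_add, LinearMap.add_apply, hP, hQ]
  | smul r P hP => rw [map_smul, LinearMap.smul_apply, hP]

theorem letter_mul_quasiShuffle_letter_mul [Add S] (k l : S) (P Q : R[FreeMonoid S]) :
    (letter R k * P) ⋆ (letter R l * Q) =
      letter R k * (P ⋆ (letter R l * Q)) + letter R l * ((letter R k * P) ⋆ Q) +
        c • (letter R (k + l) * (P ⋆ Q)) := by
  induction P using MonoidAlgebra.induction_on with
  | of u =>
    induction Q using MonoidAlgebra.induction_on with
    | of v =>
      simp only [← of_of_mul_eq_letter_mul, quasiShuffle_of_of, FreeMonoid.toList_of_mul]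
      rw [quasiShuffleWord]
    | add Q₁ Q₂ h₁ h₂ => simp only [mul_add, map_add, h₁, h₂]; module
    | smul r Q hQ => simp only [mul_smul_comm, map_smul, hQ]; module
  | add P₁ P₂ h₁ h₂ => simp only [mul_add, map_add, LinearMap.add_apply, h₁, h₂]; module
  | smul r P hP => simp only [mul_smul_comm, map_smul, LinearMap.smul_apply, hP]; module

theorem quasiShuffle_comm [AddCommMagma S] (P Q : R[FreeMonoid S]) : P ⋆ Q = Q ⋆ P := by
  induction P using letter_mul_induction generalizing Q with
  | one => rw [one_quasiShuffle, quasiShuffle_one]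
  | letter_mul k P ihP =>
    induction Q using letter_mul_induction with
    | one => rw [one_quasiShuffle, quasiShuffle_one]
    | letter_mul l Q ihQ =>
      rw [letter_mul_quasiShuffle_letter_mul, letter_mul_quasiShuffle_letter_mul, ihP, ihP, ihQ,
        add_comm k l, add_comm (letter R k * _)]
    | add Q₁ Q₂ h₁ h₂ => rw [map_add, map_add, LinearMap.add_apply, h₁, h₂]
    | smul r Q hQ => rw [map_smul, map_smul, LinearMap.smul_apply, hQ]
  | add P₁ P₂ h₁ h₂ => rw [map_add, map_add, LinearMap.add_apply, h₁, h₂]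
  | smul r P hP => rw [map_smul, map_smul, LinearMap.smul_apply, hP]

theorem letter_mul_quasiShuffle_triple_left [Add S] (k l m : S) (P Q T : R[FreeMonoid S]) :
    (letter R k * P) ⋆ (letter R l * Q) ⋆ (letter R m * T) =
      letter R k * (P ⋆ (letter R l * Q) ⋆ (letter R m * T)) +
      letter R l * ((letter R k * P) ⋆ Q ⋆ (letter R m * T)) +
      letter R m * ((letter R k * P) ⋆ (letter R l * Q) ⋆ T) +
      c • (letter R (k + l) * (P ⋆ Q ⋆ (letter R m * T)) +
        letter R (k + m) * (P ⋆ (letter R l * Q) ⋆ T) +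
        letter R (l + m) * ((letter R k * P) ⋆ Q ⋆ T)) +
      c ^ 2 • (letter R (k + l + m) * (P ⋆ Q ⋆ T)) := by
  simp only [letter_mul_quasiShuffle_letter_mul, map_add, map_smul, LinearMap.add_apply,
    LinearMap.smul_apply, mul_add, mul_smul_comm]
  module

theorem letter_mul_quasiShuffle_triple_right [Add S] (k l m : S) (P Q T : R[FreeMonoid S]) :
    (letter R k * P) ⋆ ((letter R l * Q) ⋆ (letter R m * T)) =
      letter R k * (P ⋆ ((letter R l * Q) ⋆ (letter R m * T))) +
      letter R l * ((letter R k * P) ⋆ (Q ⋆ (letter R m * T))) +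
      letter R m * ((letter R k * P) ⋆ ((letter R l * Q) ⋆ T)) +
      c • (letter R (k + l) * (P ⋆ (Q ⋆ (letter R m * T))) +
        letter R (k + m) * (P ⋆ ((letter R l * Q) ⋆ T)) +
        letter R (l + m) * ((letter R k * P) ⋆ (Q ⋆ T))) +
      c ^ 2 • (letter R (k + (l + m)) * (P ⋆ (Q ⋆ T))) := by
  simp only [letter_mul_quasiShuffle_letter_mul, map_add, map_smul, mul_add, mul_smul_comm]
  module

theorem quasiShuffle_assoc [AddSemigroup S] (P Q T : R[FreeMonoid S]) :
    P ⋆ Q ⋆ T = P ⋆ (Q ⋆ T) := by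
  induction P using letter_mul_induction generalizing Q T with
  | one => simp only [one_quasiShuffle]
  | letter_mul k P ihP =>
    induction Q using letter_mul_induction generalizing T with
    | one => simp only [one_quasiShuffle, quasiShuffle_one]
    | letter_mul l Q ihQ =>
      induction T using letter_mul_induction with
      | one => simp only [quasiShuffle_one]
      | letter_mul m T ihT =>
        rw [letter_mul_quasiShuffle_triple_left, ihT, letter_mul_quasiShuffle_triple_right]
        simp only [ihP, ihQ, add_assoc]
      | add T₁ T₂ h₁ h₂ => simp only [map_add, h₁, h₂]
      | smul r T hT => simp only [map_smul, hT]
    | add Q₁ Q₂ h₁ h₂ => simp only [map_add, LinearMap.add_apply, h₁, h₂]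
    | smul r Q hQ => simp only [map_smul, LinearMap.smul_apply, hQ]
  | add P₁ P₂ h₁ h₂ => simp only [map_add, LinearMap.add_apply, h₁, h₂]
  | smul r P hP => simp only [map_smul, LinearMap.smul_apply, hP]

end QuasiShuffle

namespace H

open scoped MonoidAlgebra

theorem toZAux_replicate_append (m n : ℕ) (r : List Letter) :
    toZAux (List.replicate m Letter.x ++ Letter.y :: r) n = (n + m + 1) :: toZAux r 0 := by
  induction m generalizing n with
  | zero => simp [toZAux]
  | succ m ih => simp [List.replicate_succ, toZAux, ih, add_right_comm, add_assoc]

theorem toZ_zW_mul (k : ℕ+) (w : FreeMonoid Letter) : toZ (zW k * w) = (k : ℕ) :: toZ w := by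
  simp [toZ, zW, toZAux_replicate_append, Nat.sub_add_cancel k.pos]

theorem pos_of_mem_toZAux {r : List Letter} {n k : ℕ} (hk : k ∈ toZAux r n) : 0 < k := by
  induction r generalizing n with
  | nil => simp [toZAux] at hk
  | cons a r ih =>
    cases a with
    | x => exact ih hk
    | y =>
      rcases List.mem_cons.mp hk with rfl | hk
      · exact n.succ_pos
      · exact ih hk

/-- The monoid homomorphism from words over `ℕ+` to words over `{x, y}` sending `k` to `z_k`. -/
def zEmbed : FreeMonoid ℕ+ →* FreeMonoid Letter := FreeMonoid.lift fun k => zW k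

/-- The `z`-decomposition `toZ` with its entries, which are positive, taken in `ℕ+`. The letters
`x` at the end of a word outside `H¹` are discarded. -/
def zParse (w : FreeMonoid Letter) : FreeMonoid ℕ+ :=
  FreeMonoid.ofList ((toZ w).map Nat.toPNat')

theorem zListW_map_coe (u : List ℕ+) :
    zListW (u.map (↑)) = zEmbed (FreeMonoid.ofList u) := by
  induction u with
  | nil => rfl
  | cons k u ih =>
    rw [FreeMonoid.ofList_cons, map_mul, ← ih]
    simp [zListW, zEmbed, zW, ← FreeMonoid.ofList_append]

theorem map_coe_zParse (w : FreeMonoid Letter) : (zParse w).toList.map (↑) = toZ w := by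
  have coe_toPNat' : ∀ k ∈ toZ w, (k.toPNat' : ℕ) = k := fun k hk =>
    PNat.toPNat'_coe (pos_of_mem_toZAux hk)
  rw [zParse, FreeMonoid.toList_ofList, List.map_map]
  exact (List.map_congr_left coe_toPNat').trans (List.map_id' _)

theorem zParse_zEmbed (u : FreeMonoid ℕ+) : zParse (zEmbed u) = u := by
  induction u using FreeMonoid.inductionOn' with
  | one => rfl
  | of_mul k u ih =>
    rw [map_mul, zEmbed, FreeMonoid.lift_eval_of, ← zEmbed, zParse, toZ_zW_mul, List.map_cons,
      FreeMonoid.ofList_cons, PNat.coe_toPNat', ← zParse, ih]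

/-- The algebra homomorphism `ℚ⟨ℕ+⟩ → H` sending the letter `k` to `z_k`. -/
noncomputable def zEmbedAlgHom : ℚ[FreeMonoid ℕ+] →ₐ[ℚ] H :=
  MonoidAlgebra.mapDomainAlgHom ℚ ℚ zEmbed

/-- The linear extension of `zParse`, a left inverse of `zEmbedAlgHom`. -/
noncomputable def zParseLinear : H →ₗ[ℚ] ℚ[FreeMonoid ℕ+] :=
  MonoidAlgebra.mapDomainLinearMap ℚ ℚ zParse

theorem zParseLinear_zEmbedAlgHom (P : ℚ[FreeMonoid ℕ+]) :
    zParseLinear (zEmbedAlgHom P) = P := by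
  induction P using MonoidAlgebra.induction_on with
  | of w => simp [zParseLinear, zEmbedAlgHom, zParse_zEmbed]
  | add P Q hP hQ => rw [map_add, map_add, hP, hQ]
  | smul r P hP => rw [map_smul, map_smul, hP]

theorem zEmbedAlgHom_of (u : FreeMonoid ℕ+) :
    zEmbedAlgHom (MonoidAlgebra.of ℚ _ u) = word (zEmbed u) := by
  simp [zEmbedAlgHom, word]

theorem zEmbedAlgHom_letter (k : ℕ+) : zEmbedAlgHom (letter ℚ k) = z k := by
  rw [letter, zEmbedAlgHom_of, zEmbed, FreeMonoid.lift_eval_of, z]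

theorem nharmW_map_coe (u v : List ℕ+) :
    nharmW (u.map (↑)) (v.map (↑)) = zEmbedAlgHom (quasiShuffleWord (-1) u v) := by
  induction u, v using quasiShuffleWord.induct with
  | case1 v => rw [List.map_nil, nharmW, quasiShuffleWord, zEmbedAlgHom_of, zListW_map_coe]
  | case2 k u =>
    rw [List.map_nil, List.map_cons, nharmW, quasiShuffleWord, zEmbedAlgHom_of, ← zListW_map_coe,
      List.map_cons]
  | case3 k u l v ih₁ ih₂ ih₃ =>
    rw [List.map_cons] at ih₁ ih₂
    rw [List.map_cons, List.map_cons, nharmW, quasiShuffleWord, ih₁, ih₂, ih₃]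
    simp only [map_add, map_mul, zEmbedAlgHom_letter, PNat.add_coe, neg_smul, one_smul,
      map_neg, sub_eq_add_neg]

theorem nharmW_toZ (u v : FreeMonoid Letter) :
    nharmW (toZ u) (toZ v) =
      zEmbedAlgHom (quasiShuffle (-1) (zParseLinear (word u)) (zParseLinear (word v))) := by
  have zParseLinear_word (w) : zParseLinear (word w) = MonoidAlgebra.of ℚ _ (zParse w) := by
    simp [zParseLinear, word]
  rw [zParseLinear_word, zParseLinear_word, quasiShuffle_of_of, ← nharmW_map_coe, map_coe_zParse,
    map_coe_zParse]

theorem nharm_eq_zEmbedAlgHom_quasiShuffle (a b : H) :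
    nharm a b = zEmbedAlgHom (quasiShuffle (-1) (zParseLinear a) (zParseLinear b)) := by
  have sum_smul_word (a : H) : a.coeff.sum (fun w r => r • word w) = a := by
    simp [word]
  conv_rhs => rw [← sum_smul_word a, ← sum_smul_word b]
  simp only [nharm, nharmW_toZ, map_finsuppSum, LinearMap.finsupp_sum_apply, map_smul,
    LinearMap.smul_apply, mul_smul, Finsupp.smul_sum]
  rw [Finsupp.sum_comm]
  exact Finsupp.sum_congr fun _ _ => Finsupp.sum_congr fun _ _ => smul_comm _ _ _

theorem nharm_comm (a b : H) : nharm a b = nharm b a := by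
  simp only [nharm_eq_zEmbedAlgHom_quasiShuffle, quasiShuffle_comm _ (zParseLinear a)]

theorem nharm_assoc (a b c : H) : nharm (nharm a b) c = nharm a (nharm b c) := by
  simp only [nharm_eq_zEmbedAlgHom_quasiShuffle, zParseLinear_zEmbedAlgHom, quasiShuffle_assoc]

end H

/-- The n-harmonic product `*̄` on `H¹` is commutative and associative. -/
theorem nharm_comm_and_assoc :
    (∀ w1 ∈ H1, ∀ w2 ∈ H1, nharm w1 w2 = nharm w2 w1) ∧
    (∀ w1 ∈ H1, ∀ w2 ∈ H1, ∀ w3 ∈ H1,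
      nharm (nharm w1 w2) w3 = nharm w1 (nharm w2 w3)) :=
  ⟨fun w1 _ w2 _ => nharm_comm w1 w2, fun w1 _ w2 _ w3 _ => nharm_assoc w1 w2 w3⟩
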